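/- arXiv:1005.3275 — 2 statements merged into one kernel-verified Lean document; each statement's English description precedes it below -/
import Mathlib

section
/- With 0 ≤ k < d fixed, the following are equivalent: (1) there exists a T-algebra B such that (x_1, ..., x_d)B ≠ B and x_{j+1} is a nonzerodivisor on B/(x_1, ..., x_j)B for every k ≤ j ≤ d−1 (i.e. x_{k+1}, ..., x_d is a regular sequence on B/(x_1, ..., x_k)B); (2) for every finite sequence of algebra modifications T = T_0 → T_1 → ⋯ → T_s of T of type ≥ k with respect to x_1, ..., x_d, one has (x_1, ..., x_d)T_s ≠ T_s. -/
/-!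
The implication (1) → (2) is the universal property of an algebra modification: every relation of
type `≥ k` becomes trivial in `B`, so the map `T → B` extends along `T = T₀ → ⋯ → T_s`, and
`(x)T_s = T_s` would force `(x)B = B`.

For (2) → (1), call a ring `A` with a sequence `x` *degenerate* (`Degenerate`) if some finite
sequence of modifications of type `≥ k` starting at `A` ends in a ring where `(x)` is the unit
ideal; (2) gives that `T` is not degenerate. The finitary nature of this notion is expressed by
`Degenerate.eventually`: if a degenerate ring maps to a reduced product `∏ Cᵢ / l`, compatibly with
the sequences, then `Cᵢ` is degenerate for `l`-almost all `i`. (A relation in the reduced product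
is a relation in almost all factors, and modifying all factors modifies the reduced product.)

A nondegenerate `A` maps, for every finite set `L` of relations, to a nondegenerate ring trivializing
`L`; the reduced product of these rings along the finite sets `L` is a nondegenerate ring in which
*all* relations of `A` become trivial (`exists_next`). Iterating `ω` times and passing to the direct
limit, realized as the ring of eventually coherent sequences modulo eventual equality, gives `B`.
-/

open IsLocalRing

/-- `f : T →ₐ[R] T'` realizes `T'` as an algebra modification of `T` of type `≥ k` with
respect to the sequence `x₁, …, x_d`: there are `k ≤ j < d` and elements `t₁, …, t_{j+1}` of
`T` with `x_{j+1} t_{j+1} = x₁t₁ + ⋯ + x_j t_j`, and an identification of `T'` with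
`T[X₁, …, X_j]/(t_{j+1} − (x₁X₁ + ⋯ + x_jX_j))` under which `f` becomes the natural map. -/
def IsAlgebraModification {R : Type} [CommRing R] {d : ℕ} (x : Fin d → R) (k : ℕ)
    {T : Type} [CommRing T] [Algebra R T] {T' : Type} [CommRing T'] [Algebra R T']
    (f : T →ₐ[R] T') : Prop :=
  ∃ (j : ℕ) (hj : j < d), k ≤ j ∧
    ∃ t : Fin (j + 1) → T,
      algebraMap R T (x ⟨j, hj⟩) * t (Fin.last j) =
        ∑ i : Fin j, algebraMap R T (x ⟨i.1, i.2.trans hj⟩) * t i.castSucc ∧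
      ∃ e : T' ≃+* (MvPolynomial (Fin j) T ⧸
          (Ideal.span {MvPolynomial.C (t (Fin.last j)) -
            ∑ i : Fin j, MvPolynomial.C (algebraMap R T (x ⟨i.1, i.2.trans hj⟩)) *
              MvPolynomial.X i})),
        ∀ a : T, e (f a) = Ideal.Quotient.mk _ (MvPolynomial.C a)

/-! ### The modification of a ring at one tuple -/

section Modification

/-- The ring `A[X₁, …, X_j]/(c − (y₁X₁ + ⋯ + y_jX_j))`. -/
abbrev Modif {A : Type} [CommRing A] {j : ℕ} (c : A) (y : Fin j → A) : Type :=
  MvPolynomial (Fin j) A ⧸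
    (Ideal.span {MvPolynomial.C c - ∑ i : Fin j, MvPolynomial.C (y i) * MvPolynomial.X i})

/-- The structure map `A → A[X₁, …, X_j]/(c − (y₁X₁ + ⋯ + y_jX_j))`. -/
noncomputable def Modif.of {A : Type} [CommRing A] {j : ℕ} (c : A) (y : Fin j → A) :
    A →+* Modif c y :=
  (Ideal.Quotient.mk _).comp MvPolynomial.C

lemma Modif.of_eq_sum {A : Type} [CommRing A] {j : ℕ} (c : A) (y : Fin j → A) :
    Modif.of c y c = ∑ i, Modif.of c y (y i) * Ideal.Quotient.mk _ (MvPolynomial.X i) := by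
  have h : Ideal.Quotient.mk (Ideal.span {MvPolynomial.C c -
      ∑ i : Fin j, MvPolynomial.C (y i) * MvPolynomial.X i})
      (MvPolynomial.C c - ∑ i : Fin j, MvPolynomial.C (y i) * MvPolynomial.X i) = 0 :=
    Ideal.Quotient.eq_zero_iff_mem.2 (Ideal.subset_span rfl)
  rw [map_sub, sub_eq_zero, map_sum] at h
  simpa [Modif.of] using h

lemma Modif.exists_lift {A S : Type} [CommRing A] [CommRing S] {j : ℕ} (c : A) (y : Fin j → A)
    (g : A →+* S) (z : Fin j → S) (h : g c = ∑ i, g (y i) * z i) :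
    ∃ G : Modif c y →+* S, ∀ a, G (Modif.of c y a) = g a := by
  refine ⟨Ideal.Quotient.lift _ (MvPolynomial.eval₂Hom g z) ?_, fun a => ?_⟩
  · intro a ha
    rw [← RingHom.mem_ker]
    refine (Ideal.span_le.2 ?_ : Ideal.span _ ≤ RingHom.ker (MvPolynomial.eval₂Hom g z)) ha
    rintro _ rfl
    simp [RingHom.mem_ker, h]
  · simp [Modif.of]

end Modification

/-! ### Reduced products of rings -/

section ReducedProduct

/-- The ideal of families that vanish along the filter `l`. -/
def eventuallyZero {ι : Type} (l : Filter ι) (C : ι → Type) [∀ i, CommRing (C i)] :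
    Ideal (∀ i, C i) where
  carrier := {a | ∀ᶠ i in l, a i = 0}
  add_mem' ha hb := by
    filter_upwards [ha, hb] with i h1 h2
    simp [h1, h2]
  zero_mem' := by simp
  smul_mem' c a ha := by
    filter_upwards [ha] with i h1
    simp [h1]

/-- The reduced product of the rings `C i` along the filter `l`. -/
abbrev RedProd {ι : Type} (l : Filter ι) (C : ι → Type) [∀ i, CommRing (C i)] : Type :=
  (∀ i, C i) ⧸ eventuallyZero l C

/-- The class of a family in the reduced product. -/
def RedProd.mk {ι : Type} (l : Filter ι) (C : ι → Type) [∀ i, CommRing (C i)] :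
    (∀ i, C i) →+* RedProd l C := Ideal.Quotient.mk _

lemma RedProd.mk_surjective {ι : Type} (l : Filter ι) (C : ι → Type) [∀ i, CommRing (C i)] :
    Function.Surjective (RedProd.mk l C) := Ideal.Quotient.mk_surjective

lemma RedProd.mk_eq {ι : Type} {l : Filter ι} {C : ι → Type} [∀ i, CommRing (C i)]
    {a b : ∀ i, C i} : RedProd.mk l C a = RedProd.mk l C b ↔ ∀ᶠ i in l, a i = b i := by
  unfold RedProd.mk
  rw [Ideal.Quotient.eq]
  change (∀ᶠ i in l, a i - b i = 0) ↔ _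
  simp only [sub_eq_zero]

/-- Functoriality of the reduced product in its factors. -/
lemma RedProd.exists_map {ι : Type} (l : Filter ι) (C D : ι → Type) [∀ i, CommRing (C i)]
    [∀ i, CommRing (D i)] (f : ∀ i, C i →+* D i) :
    ∃ F : RedProd l C →+* RedProd l D,
      ∀ a, F (RedProd.mk l C a) = RedProd.mk l D fun i => f i (a i) := by
  refine ⟨Ideal.Quotient.lift _
    ((RedProd.mk l D).comp (RingHom.pi fun i => (f i).comp (Pi.evalRingHom C i))) ?_, fun a => rfl⟩
  intro a ha
  rw [← map_zero (RedProd.mk l D)]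
  refine RedProd.mk_eq.2 ?_
  filter_upwards [(ha : ∀ᶠ i in l, a i = 0)] with i hi
  change f i (a i) = 0
  rw [hi, map_zero]

end ReducedProduct

/-! ### Degenerate rings and trivialization of relations -/

section Degenerate

variable {d : ℕ}

/-- The tuple `t` is a relation of type `j` with respect to `x`. -/
def IsRel {A : Type} [CommRing A] (x : Fin d → A) (j : ℕ) (hj : j < d) (t : Fin (j + 1) → A) :
    Prop :=
  x ⟨j, hj⟩ * t (Fin.last j) = ∑ i : Fin j, x ⟨i.1, i.2.trans hj⟩ * t i.castSucc

/-- Some finite sequence of modifications of `A` of type `≥ k` ends in a ring in which the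
sequence `x` generates the unit ideal. -/
inductive Degenerate (k : ℕ) : ∀ (A : Type) [CommRing A], (Fin d → A) → Prop
  | base (A : Type) [CommRing A] (x : Fin d → A) (h : Ideal.span (Set.range x) = ⊤) :
      Degenerate k A x
  | step (A : Type) [CommRing A] (x : Fin d → A) (j : ℕ) (hj : j < d) (hk : k ≤ j)
      (t : Fin (j + 1) → A) (ht : IsRel x j hj t)
      (h : Degenerate k (Modif (t (Fin.last j)) fun i : Fin j => x ⟨i.1, i.2.trans hj⟩)
        (fun m => Modif.of _ _ (x m))) : Degenerate k A x

lemma span_range_eq_top_iff {A : Type} [CommRing A] (x : Fin d → A) :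
    Ideal.span (Set.range x) = ⊤ ↔ ∃ c : Fin d → A, ∑ i, c i * x i = 1 := by
  rw [Ideal.eq_top_iff_one, Ideal.mem_span_range_iff_exists_fun]

/-- Degeneracy is finitary: it is detected on almost all factors of a reduced product. -/
lemma Degenerate.eventually {k : ℕ} {A : Type} [CommRing A] {x : Fin d → A}
    (h : Degenerate k A x) {ι : Type} (l : Filter ι) (C : ι → Type) [∀ i, CommRing (C i)]
    (y : ∀ i, Fin d → C i) (g : A →+* RedProd l C)
    (hg : ∀ m, g (x m) = RedProd.mk l C fun i => y i m) :
    ∀ᶠ i in l, Degenerate k (C i) (y i) := by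
  induction h generalizing C with
  | base A x h =>
    obtain ⟨c, hc⟩ := (span_range_eq_top_iff x).1 h
    choose c' hc' using fun m => RedProd.mk_surjective l C (g (c m))
    have h1 : RedProd.mk l C (∑ m, c' m * fun i => y i m) = RedProd.mk l C 1 := by
      rw [map_one, ← map_one g, ← hc, map_sum, map_sum]
      simp [hg, hc']
    filter_upwards [RedProd.mk_eq.1 h1] with i hi
    refine .base _ _ ((span_range_eq_top_iff _).2 ⟨fun m => c' m i, ?_⟩)
    simpa using hi
  | step A x j hj hk t ht h ih =>
    choose t' ht' using fun m => RedProd.mk_surjective l C (g (t m))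
    have h1 : RedProd.mk l C ((fun i => y i ⟨j, hj⟩) * t' (Fin.last j)) =
        RedProd.mk l C
          (∑ m : Fin j, (fun i => y i ⟨m.1, m.2.trans hj⟩) * t' m.castSucc) := by
      simp only [map_mul, map_sum, ht', ← hg]
      rw [← map_mul, ht, map_sum]
      simp
    let D : ι → Type := fun i =>
      Modif (t' (Fin.last j) i) fun m : Fin j => y i ⟨m.1, m.2.trans hj⟩
    let o : ∀ i, C i →+* D i := fun i => Modif.of _ _
    obtain ⟨F, hF⟩ := RedProd.exists_map l C D o
    obtain ⟨G, hG⟩ := Modif.exists_lift (t (Fin.last j))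
      (fun i : Fin j => x ⟨i.1, i.2.trans hj⟩) (F.comp g)
      (fun m => RedProd.mk l D fun i => Ideal.Quotient.mk _ (MvPolynomial.X m)) (by
        simp only [RingHom.comp_apply, hg, hF, ← ht', ← map_mul, ← map_sum]
        congr 1
        funext i
        rw [Finset.sum_apply]
        exact Modif.of_eq_sum (t' (Fin.last j) i) fun m : Fin j => y i ⟨m.1, m.2.trans hj⟩)
    have h2 := ih D (fun i m => o i (y i m)) G (fun m => by
      rw [hG, RingHom.comp_apply, hg, hF])
    filter_upwards [h2, RedProd.mk_eq.1 h1] with i hi hr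
    refine .step _ _ j hj hk (fun m => t' m i) ?_ hi
    simpa [IsRel] using hr

/-- The relation `t` becomes trivial along `h`: the image of `t_{j+1}` lies in
`(x₁, …, x_j)C`. -/
def Trivializes {A C : Type} [CommRing A] [CommRing C] (h : A →+* C) (x : Fin d → A) (j : ℕ)
    (hj : j < d) (t : Fin (j + 1) → A) : Prop :=
  ∃ c : Fin j → C, h (t (Fin.last j)) = ∑ i : Fin j, h (x ⟨i.1, i.2.trans hj⟩) * c i

lemma exists_trivializes_finset {k : ℕ} {A : Type} [CommRing A] {x : Fin d → A}
    (hA : ¬ Degenerate k A x) (L : Finset (Σ j : Fin d, (Fin (j.1 + 1) → A))) :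
    ∃ (C : Type) (_ : CommRing C) (h : A →+* C), ¬ Degenerate k C (fun m => h (x m)) ∧
      ∀ r ∈ L, k ≤ r.1.1 → IsRel x r.1.1 r.1.2 r.2 → Trivializes h x r.1.1 r.1.2 r.2 := by
  classical
  induction L using Finset.induction with
  | empty => exact ⟨A, inferInstance, RingHom.id A, hA, by simp⟩
  | insert r L _ ih =>
    obtain ⟨C, _, h, hC, hL⟩ := ih
    by_cases hr : k ≤ r.1.1 ∧ IsRel x r.1.1 r.1.2 r.2
    · obtain ⟨⟨j, hj⟩, t⟩ := r
      obtain ⟨hk, ht⟩ := hr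
      let o := Modif.of (h (t (Fin.last j))) (fun i : Fin j => h (x ⟨i.1, i.2.trans hj⟩))
      refine ⟨_, inferInstance, o.comp h, fun hD => hC ?_, ?_⟩
      · refine .step C _ j hj hk (fun m => h (t m)) ?_ hD
        have := congrArg h ht
        simpa [IsRel] using this
      · intro r' hr' hk' ht'
        rcases Finset.mem_insert.1 hr' with rfl | hr'
        · exact ⟨fun i => Ideal.Quotient.mk _ (MvPolynomial.X i),
            Modif.of_eq_sum (h (t (Fin.last j))) fun i : Fin j => h (x ⟨i.1, i.2.trans hj⟩)⟩
        · obtain ⟨c, hc⟩ := hL r' hr' hk' ht'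
          exact ⟨fun i => o (c i), by simp [hc]⟩
    · refine ⟨C, inferInstance, h, hC, fun r' hr' hk' ht' => ?_⟩
      rcases Finset.mem_insert.1 hr' with rfl | hr'
      · exact absurd ⟨hk', ht'⟩ hr
      · exact hL r' hr' hk' ht'

/-- A nondegenerate ring maps to a nondegenerate ring in which all of its relations of type `≥ k`
become trivial. -/
lemma exists_next {k : ℕ} {A : Type} [CommRing A] {x : Fin d → A}
    (hA : ¬ Degenerate k A x) :
    ∃ (C : Type) (_ : CommRing C) (h : A →+* C), ¬ Degenerate k C (fun m => h (x m)) ∧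
      ∀ (j : ℕ) (hj : j < d) (t : Fin (j + 1) → A), k ≤ j → IsRel x j hj t →
        Trivializes h x j hj t := by
  classical
  choose C hC h hD hL using exists_trivializes_finset (k := k) hA
  let l : Filter (Finset (Σ j : Fin d, (Fin (j.1 + 1) → A))) := Filter.atTop
  refine ⟨RedProd l C, inferInstance, (RedProd.mk l C).comp (RingHom.pi h), fun hB => ?_, ?_⟩
  · obtain ⟨L, hL'⟩ := (hB.eventually l C (fun L m => h L (x m)) (RingHom.id _)
      fun m => rfl).exists
    exact hD L hL'
  · intro j hj t hk ht
    -- `c L` solves the relation in the factor of index `L`, as soon as the relation lies in `L`.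
    have h1 : ∀ L, ∃ c : Fin j → C L, (⟨⟨j, hj⟩, t⟩ : Σ j : Fin d, (Fin (j.1 + 1) → A)) ∈ L →
        h L (t (Fin.last j)) = ∑ i : Fin j, h L (x ⟨i.1, i.2.trans hj⟩) * c i := by
      intro L
      by_cases hm : (⟨⟨j, hj⟩, t⟩ : Σ j : Fin d, (Fin (j.1 + 1) → A)) ∈ L
      · obtain ⟨c, hc⟩ := hL L _ hm hk ht
        exact ⟨c, fun _ => hc⟩
      · exact ⟨0, fun h => absurd h hm⟩
    choose c hc using h1
    refine ⟨fun i => RedProd.mk l C fun L => c L i, ?_⟩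
    simp only [RingHom.comp_apply, ← map_mul, ← map_sum]
    refine RedProd.mk_eq.2 ?_
    filter_upwards [Filter.eventually_ge_atTop {(⟨⟨j, hj⟩, t⟩ : Σ j : Fin d, (Fin (j.1 + 1) → A))}]
      with L hle
    rw [Finset.sum_apply]
    exact hc L (hle (Finset.mem_singleton_self _))

end Degenerate

/-! ### The direct limit of a sequence of nondegenerate rings -/

section Limit

/-- An element of one ring of a sequence extends to a family that is coherent from there on. -/
lemma exists_coherent (N : ℕ) (A : ℕ → Type) [∀ n, CommRing (A n)]
    (f : ∀ n, A n →+* A (n + 1)) (y : A N) :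
    ∃ b : ∀ n, A n, b N = y ∧ ∀ n, N ≤ n → b (n + 1) = f n (b n) := by
  induction N generalizing A with
  | zero => exact ⟨fun n => Nat.rec y (fun n a => f n a) n, rfl, fun _ _ => rfl⟩
  | succ N ih =>
    obtain ⟨b, hb, hb'⟩ := ih (fun n => A (n + 1)) (fun n => f (n + 1)) y
    refine ⟨fun n => Nat.casesOn n 0 b, hb, fun n hn => ?_⟩
    cases n with
    | zero => omega
    | succ n => exact hb' n (by omega)

/-- The direct limit of `A 0 → A 1 → ⋯`, as the subring of eventually coherent classes in the
reduced product of the `A n` along `atTop`. -/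
def seqLimit (A : ℕ → Type) [∀ n, CommRing (A n)] (f : ∀ n, A n →+* A (n + 1)) :
    Subring (RedProd Filter.atTop A) where
  carrier := {u | ∃ a : ∀ n, A n, RedProd.mk _ A a = u ∧
    ∀ᶠ n in Filter.atTop, a (n + 1) = f n (a n)}
  mul_mem' := by
    rintro _ _ ⟨a, rfl, ha⟩ ⟨b, rfl, hb⟩
    refine ⟨a * b, map_mul _ _ _, ?_⟩
    filter_upwards [ha, hb] with n h1 h2
    simp [h1, h2]
  one_mem' := ⟨1, map_one _, by simp⟩
  add_mem' := by
    rintro _ _ ⟨a, rfl, ha⟩ ⟨b, rfl, hb⟩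
    refine ⟨a + b, map_add _ _ _, ?_⟩
    filter_upwards [ha, hb] with n h1 h2
    simp [h1, h2]
  zero_mem' := ⟨0, map_zero _, by simp⟩
  neg_mem' := by
    rintro _ ⟨a, rfl, ha⟩
    refine ⟨-a, map_neg _ _, ?_⟩
    filter_upwards [ha] with n h1
    simp [h1]

/-- A nondegenerate `T`-algebra, a stage in the construction of `B`. -/
structure Stage {d : ℕ} (k : ℕ) (T : Type) [CommRing T] (x : Fin d → T) where
  /-- The underlying type. -/
  A : Type
  [ring : CommRing A]
  /-- The structure map. -/
  φ : T →+* A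
  nondeg : ¬ Degenerate k A (fun m => φ (x m))

attribute [instance] Stage.ring

lemma exists_nextStage {d k : ℕ} {T : Type} [CommRing T] {x : Fin d → T} (S : Stage k T x) :
    ∃ (S' : Stage k T x) (f : S.A →+* S'.A), (∀ a, f (S.φ a) = S'.φ a) ∧
      ∀ (j : ℕ) (hj : j < d) (t : Fin (j + 1) → S.A), k ≤ j →
        IsRel (fun m => S.φ (x m)) j hj t → Trivializes f (fun m => S.φ (x m)) j hj t := by
  obtain ⟨C, _, h, hC, hL⟩ := exists_next S.nondeg
  exact ⟨⟨C, h.comp S.φ, hC⟩, h, fun _ => rfl, hL⟩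

lemma exists_limit {d k : ℕ} {T : Type} [CommRing T] {x : Fin d → T}
    (hT : ¬ Degenerate k T x) :
    ∃ (B : Type) (_ : CommRing B) (φ : T →+* B), Ideal.span (Set.range fun m => φ (x m)) ≠ ⊤ ∧
      ∀ (j : ℕ) (hj : j < d) (t : Fin (j + 1) → B), k ≤ j → IsRel (fun m => φ (x m)) j hj t →
        ∃ c : Fin j → B, t (Fin.last j) = ∑ i : Fin j, φ (x ⟨i.1, i.2.trans hj⟩) * c i := by
  choose next f hf hrel using fun S : Stage k T x => exists_nextStage S
  obtain ⟨S, hS⟩ : ∃ S : ℕ → Stage k T x, ∀ n, S (n + 1) = next (S n) :=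
    ⟨fun n => Nat.rec ⟨T, RingHom.id T, hT⟩ (fun _ S => next S) n, fun _ => rfl⟩
  replace hS : ∀ n, ∃ F : (S n).A →+* (S (n + 1)).A, (∀ a, F ((S n).φ a) = (S (n + 1)).φ a) ∧
      ∀ (j : ℕ) (hj : j < d) (t : Fin (j + 1) → (S n).A), k ≤ j →
        IsRel (fun m => (S n).φ (x m)) j hj t →
        Trivializes F (fun m => (S n).φ (x m)) j hj t := fun n => by
    rw [hS]
    exact ⟨_, hf _, hrel _⟩
  choose F hf hrel using hS
  let A : ℕ → Type := fun n => (S n).A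
  let _ : ∀ n, CommRing (A n) := fun n => (S n).ring
  let Φ : ∀ n, T →+* A n := fun n => (S n).φ
  let φ : T →+* seqLimit A F :=
    ((RedProd.mk Filter.atTop A).comp (RingHom.pi Φ)).codRestrict _
      fun a => ⟨fun n => Φ n a, rfl, .of_forall fun n => (hf n a).symm⟩
  have hφ : ∀ a, (φ a : RedProd Filter.atTop A) = RedProd.mk _ A fun n => Φ n a :=
    fun a => rfl
  refine ⟨seqLimit A F, inferInstance, φ, fun h => ?_, ?_⟩
  · obtain ⟨c, hc⟩ := (span_range_eq_top_iff _).1 h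
    choose c' hc' _ using fun m => (c m).2
    have h1 : RedProd.mk Filter.atTop A (∑ m, c' m * fun n => Φ n (x m)) =
        RedProd.mk _ A 1 := by
      have := congrArg Subtype.val hc
      simp only [map_sum, map_mul, hc', ← hφ, map_one]
      simpa using this
    obtain ⟨n, hn⟩ := (RedProd.mk_eq.1 h1).exists
    refine (S n).nondeg (.base _ _ ((span_range_eq_top_iff _).2 ⟨fun m => c' m n, ?_⟩))
    simpa using hn
  · intro j hj t hk ht
    choose t' ht' hco using fun m => (t m).2
    have h1 : RedProd.mk Filter.atTop A ((fun n => Φ n (x ⟨j, hj⟩)) * t' (Fin.last j)) =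
        RedProd.mk _ A
          (∑ i : Fin j, (fun n => Φ n (x ⟨i.1, i.2.trans hj⟩)) * t' i.castSucc) := by
      have := congrArg Subtype.val ht
      simp only [map_sum, map_mul, ht', ← hφ]
      simpa using this
    obtain ⟨N, hN⟩ := Filter.eventually_atTop.1
      ((RedProd.mk_eq.1 h1).and (hco (Fin.last j)))
    -- The relation holds at stage `N`, hence is trivial at stage `N + 1` and beyond.
    obtain ⟨c, hc⟩ := hrel N j hj (fun m => t' m N) hk (by
      simpa [IsRel] using (hN N le_rfl).1)
    choose b hb hb' using fun i => exists_coherent (N + 1) A F (c i)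
    refine ⟨fun i => ⟨RedProd.mk _ A (b i), b i, rfl,
      Filter.eventually_atTop.2 ⟨N + 1, hb' i⟩⟩, Subtype.ext ?_⟩
    have h2 : RedProd.mk Filter.atTop A (t' (Fin.last j)) = RedProd.mk _ A
        (∑ i : Fin j, (fun n => Φ n (x ⟨i.1, i.2.trans hj⟩)) * b i) := by
      refine RedProd.mk_eq.2 (Filter.eventually_atTop.2 ⟨N + 1, fun n hn => ?_⟩)
      induction n, hn using Nat.le_induction with
      | base =>
        rw [(hN N le_rfl).2]
        simp only [Finset.sum_apply, Pi.mul_apply, hb]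
        refine hc.trans (Finset.sum_congr rfl fun i _ => ?_)
        rw [hf]
      | succ n hn ih =>
        rw [(hN n (by omega)).2, ih]
        simp only [Finset.sum_apply, Pi.mul_apply, map_sum, map_mul]
        refine Finset.sum_congr rfl fun i _ => ?_
        rw [hb' i n hn]
        exact congrArg (· * _) (hf n _)
    rw [← ht', h2]
    simp [map_sum, hφ]

end Limit

/-! ### Sequences of algebra modifications -/

section Sequences

/-- A bundled `R`-algebra. -/
structure BAlg (R : Type) [CommRing R] where
  /-- The underlying type. -/
  A : Type
  [ring : CommRing A]
  [alg : Algebra R A]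

attribute [instance] BAlg.ring BAlg.alg

/-- Degeneracy of an `R`-algebra is witnessed by an actual sequence of algebra modifications. -/
lemma Degenerate.exists_seq {R : Type} [CommRing R] {d k : ℕ} (x : Fin d → R) {A : Type}
    [CommRing A] {y : Fin d → A} (h : Degenerate k A y) :
    ∀ [Algebra R A], (y = fun m => algebraMap R A (x m)) →
    ∃ (s : ℕ) (v : Fin (s + 1) → BAlg R), v 0 = ⟨A⟩ ∧
      (∀ i : Fin s, ∃ f : (v i.castSucc).A →ₐ[R] (v i.succ).A, IsAlgebraModification x k f) ∧
      Ideal.span (Set.range fun m => algebraMap R (v (Fin.last s)).A (x m)) = ⊤ := by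
  induction h with
  | base A y h =>
    intro _ hy
    exact ⟨0, fun _ => ⟨A⟩, rfl, fun i => i.elim0, by subst hy; exact h⟩
  | step A y j hj hk t ht h ih =>
    intro _ hy
    subst hy
    obtain ⟨s, v, hv0, hv, htop⟩ := ih rfl
    refine ⟨s + 1, Fin.cons ⟨A⟩ v, rfl, ?_, htop⟩
    refine Fin.cases ?_ fun i => hv i
    change ∃ f : A →ₐ[R] (v 0).A, IsAlgebraModification x k f
    rw [hv0]
    exact ⟨{ Modif.of _ _ with commutes' := fun _ => rfl }, j, hj, hk, t, ht,
      RingEquiv.refl _, fun _ => rfl⟩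

/-- Universal property of an algebra modification, for maps to a ring `B` in which all relations
of type `≥ k` are trivial. -/
lemma IsAlgebraModification.exists_extend {R : Type} [CommRing R] {d k : ℕ} {x : Fin d → R}
    {T T' B : Type} [CommRing T] [Algebra R T] [CommRing T'] [Algebra R T'] [CommRing B]
    {f : T →ₐ[R] T'} (hf : IsAlgebraModification x k f) (ρ : R →+* B)
    (hB : ∀ (j : ℕ) (hj : j < d), k ≤ j → ∀ b : B,
      ρ (x ⟨j, hj⟩) * b ∈ Ideal.span (Set.range fun i : Fin j => ρ (x ⟨i.1, i.2.trans hj⟩)) →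
      b ∈ Ideal.span (Set.range fun i : Fin j => ρ (x ⟨i.1, i.2.trans hj⟩)))
    (g : T →+* B) (hg : ∀ r, g (algebraMap R T r) = ρ r) :
    ∃ g' : T' →+* B, ∀ r, g' (algebraMap R T' r) = ρ r := by
  obtain ⟨j, hj, hk, t, ht, e, he⟩ := hf
  have h1 : g (t (Fin.last j)) ∈
      Ideal.span (Set.range fun i : Fin j => ρ (x ⟨i.1, i.2.trans hj⟩)) := by
    refine hB j hj hk _ (Ideal.mem_span_range_iff_exists_fun.2 ⟨fun i => g (t i.castSucc), ?_⟩)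
    have := congrArg g ht
    simp only [map_mul, map_sum, hg] at this
    rw [this]
    exact Finset.sum_congr rfl fun i _ => mul_comm _ _
  obtain ⟨c, hc⟩ := Ideal.mem_span_range_iff_exists_fun.1 h1
  obtain ⟨G, hG⟩ := Modif.exists_lift (t (Fin.last j))
    (fun i : Fin j => algebraMap R T (x ⟨i.1, i.2.trans hj⟩)) g c (by
      rw [← hc]
      exact Finset.sum_congr rfl fun i _ => by rw [hg, mul_comm])
  refine ⟨G.comp (e : T' →+* _), fun r => ?_⟩
  rw [← f.commutes r, RingHom.comp_apply]
  change G (e (f _)) = _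
  rw [he, ← hg]
  exact hG _

end Sequences

/-- **Proposition 3.3.** Let `(R, m)` be a Noetherian local ring of Krull dimension `d` with
a system of parameters `x₁, …, x_d`, let `T` be an `R`-algebra and fix `0 ≤ k < d`. The
following are equivalent: (1) there is a `T`-algebra `B` with `(x₁, …, x_d)B ≠ B` on which
`x_{k+1}, …, x_d` is a regular sequence modulo `(x₁, …, x_k)B`; (2) for every finite sequence
of algebra modifications `T = T₀ → T₁ → ⋯ → T_s` of type `≥ k` with respect to `x₁, …, x_d`
one has `(x₁, …, x_d)T_s ≠ T_s`. -/
theorem algebra_modifications_of_type_ge_k_criterion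
    (R : Type) [CommRing R] [IsNoetherianRing R] [IsLocalRing R]
    (d : ℕ) (hdim : ringKrullDim R = d)
    (x : Fin d → R) (hxm : ∀ i, x i ∈ maximalIdeal R)
    (hsop : (Ideal.span (Set.range x)).radical = maximalIdeal R)
    (T : Type) [CommRing T] [Algebra R T]
    (k : ℕ) (hk : k < d) :
    (∃ (B : Type) (_ : CommRing B) (_ : Algebra T B),
      Ideal.span (Set.range fun i => algebraMap T B (algebraMap R T (x i))) ≠ ⊤ ∧
      ∀ (j : ℕ) (hj : j < d), k ≤ j → ∀ b : B,
        algebraMap T B (algebraMap R T (x ⟨j, hj⟩)) * b ∈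
          Ideal.span (Set.range fun i : Fin j =>
            algebraMap T B (algebraMap R T (x ⟨i.1, i.2.trans hj⟩))) →
        b ∈ Ideal.span (Set.range fun i : Fin j =>
            algebraMap T B (algebraMap R T (x ⟨i.1, i.2.trans hj⟩)))) ↔
    (∀ (s : ℕ) (Ty : Fin (s + 1) → Type)
      [∀ i, CommRing (Ty i)] [∀ i, Algebra R (Ty i)]
      (_e₀ : T ≃ₐ[R] Ty 0)
      (f : (i : Fin s) → (Ty i.castSucc →ₐ[R] Ty i.succ)),
      (∀ i, IsAlgebraModification x k (f i)) →
      Ideal.span (Set.range fun i => algebraMap R (Ty (Fin.last s)) (x i)) ≠ ⊤) := by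
  constructor
  · rintro ⟨B, _, _, hne, hB⟩ s Ty _ _ e₀ f hf htop
    have key : ∀ i, ∃ g : Ty i →+* B,
        ∀ r, g (algebraMap R (Ty i) r) = (algebraMap T B).comp (algebraMap R T) r := by
      refine Fin.induction ?_ fun i ih => ?_
      · exact ⟨(algebraMap T B).comp (e₀.symm : Ty 0 →+* T), fun r => by simp⟩
      · obtain ⟨g, hg⟩ := ih
        exact (hf i).exists_extend _ hB g hg
    obtain ⟨g, hg⟩ := key (Fin.last s)
    obtain ⟨c, hc⟩ := (span_range_eq_top_iff _).1 htop
    refine hne ((span_range_eq_top_iff _).2 ⟨fun i => g (c i), ?_⟩)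
    have := congrArg g hc
    simpa [hg] using this
  · intro H
    have hT : ¬ Degenerate k T (fun m => algebraMap R T (x m)) := by
      intro h
      obtain ⟨s, v, hv0, hv, htop⟩ := h.exists_seq x rfl
      choose f hf using hv
      have e₀ : Nonempty (T ≃ₐ[R] (v 0).A) := by
        rw [hv0]
        exact ⟨AlgEquiv.refl⟩
      exact H s (fun i => (v i).A) e₀.some f hf htop
    obtain ⟨B, _, φ, hne, hB⟩ := exists_limit hT
    refine ⟨B, inferInstance, φ.toAlgebra, hne, fun j hj hkj b hb => ?_⟩
    obtain ⟨c, hc⟩ := Ideal.mem_span_range_iff_exists_fun.1 hb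
    -- The membership `hb` says that the coefficients `c`, followed by `b`, form a relation.
    obtain ⟨c', hc'⟩ := hB j hj (Fin.snoc c b : Fin (j + 1) → B) hkj (by
      simp only [IsRel, Fin.snoc_last, Fin.snoc_castSucc]
      refine hc.symm.trans (Finset.sum_congr rfl fun i _ => mul_comm _ _))
    rw [Fin.snoc_last] at hc'
    refine Ideal.mem_span_range_iff_exists_fun.2 ⟨c', ?_⟩
    rw [hc']
    exact Finset.sum_congr rfl fun i _ => mul_comm _ _
end

section
/- Let R be an integral domain, R^+ its absolute integral closure, and P a prime ideal of R^+. Then the natural ring homomorphism R/(P ∩ R) → R^+/P is injective and integral, the ring R^+/P is an integral domain in which every monic polynomial of positive degree has a root, and R^+/P is isomorphic, as an R/(P ∩ R)-algebra, to the absolute integral closure of the domain R/(P ∩ R). -/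
/-!
Write `R⁺` for the integral closure of `R` in an algebraic closure `Ω` of its fraction field.
A monic polynomial of positive degree over `R⁺ ⧸ P` lifts to a monic polynomial over `R⁺`; the
lift has a root in `Ω`, which is integral over `R⁺`, hence over `R`, so it lies in `R⁺`
(`exists_isRoot_integralClosure`, `exists_isRoot_quotient`).

Hence `B = R⁺ ⧸ P` is a domain, integral over its subring `A = R ⧸ (P ∩ R)`, in which monic
polynomials have roots. Any such `B` is an absolute integral closure of `A`
(`nonempty_algEquiv_integralClosure`): by algebraicity `B` maps over `A` to an algebraic closure
of `Frac A`, the map is injective because a nonzero ideal of an integral extension of domains meets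
the base nontrivially, and its image is the whole integral closure because every monic polynomial
over `A` already splits into linear factors over `B` (`mem_range_of_eval₂_eq_zero`).
-/

open Polynomial in
theorem exists_isRoot_integralClosure {R K : Type*} [CommRing R] [Field K] [Algebra R K]
    [IsAlgClosed K] (f : (integralClosure R K)[X]) (hf : f.Monic) (hd : 0 < f.degree) :
    ∃ a, f.IsRoot a := by
  obtain ⟨x, hx⟩ := IsAlgClosed.exists_aeval_eq_zero_of_injective K
    (show Function.Injective (algebraMap (integralClosure R K) K) from Subtype.val_injective)
    f hd.ne'
  have hint : IsIntegral (integralClosure R K) x := ⟨f, hf, hx⟩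
  refine ⟨⟨x, isIntegral_trans x hint⟩, ?_⟩
  apply Subtype.val_injective
  change algebraMap (integralClosure R K) K _ = algebraMap (integralClosure R K) K 0
  rw [map_zero, ← hx, ← aeval_algebraMap_apply_eq_algebraMap_eval]
  rfl

open Polynomial in
/-- Roots of monic polynomials are inherited by quotients, since monic polynomials lift to monic
polynomials of the same degree. -/
theorem exists_isRoot_quotient {S : Type*} [CommRing S] (P : Ideal S) [P.IsPrime]
    (hS : ∀ f : S[X], f.Monic → 0 < f.degree → ∃ a, f.IsRoot a)
    (f : (S ⧸ P)[X]) (hf : f.Monic) (hd : 0 < f.degree) : ∃ a, f.IsRoot a := by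
  obtain ⟨g, hg, hgd, hgm⟩ := lifts_and_degree_eq_and_monic
    ((lifts_iff_coeff_lifts f).2 fun _ => Ideal.Quotient.mk_surjective _) hf
  obtain ⟨a, ha⟩ := hS g hgm (hgd ▸ hd)
  exact ⟨Ideal.Quotient.mk P a, hg ▸ ha.map⟩

open Polynomial in
/-- If monic polynomials of positive degree over `B` have roots in `B`, they split over `B`, so a
ring homomorphism to a domain acquires no new roots of them. -/
theorem mem_range_of_eval₂_eq_zero {B K : Type*} [CommRing B] [IsDomain B] [CommRing K] [IsDomain K]
    (hB : ∀ f : B[X], f.Monic → 0 < f.degree → ∃ a, f.IsRoot a) (φ : B →+* K) (x : K)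
    (f : B[X]) (hf : f.Monic) (hx : f.eval₂ φ x = 0) : x ∈ Set.range φ := by
  induction hn : f.natDegree generalizing f with
  | zero =>
    rw [hf.natDegree_eq_zero.1 hn] at hx
    simp at hx
  | succ n ih =>
    obtain ⟨b, hb⟩ := hB f hf (natDegree_pos_iff_degree_pos.1 (by omega))
    obtain ⟨g, rfl⟩ := dvd_iff_isRoot.2 hb
    have hg : g.Monic := (monic_X_sub_C b).of_mul_monic_left hf
    rw [eval₂_mul, mul_eq_zero] at hx
    rcases hx with hx | hx
    · exact ⟨b, (sub_eq_zero.1 (by simpa using hx)).symm⟩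
    · refine ih g hg hx ?_
      rw [(monic_X_sub_C b).natDegree_mul hg, natDegree_X_sub_C] at hn
      omega

open Polynomial in
/-- An integral extension of domains `A ⊆ B` in which monic polynomials over `B` have roots is an
absolute integral closure of `A`. The latter may be computed in any algebraically closed field
containing `A`, since it only involves elements algebraic over `A`. -/
theorem nonempty_algEquiv_integralClosure {A B K : Type*} [CommRing A] [IsDomain A] [CommRing B]
    [IsDomain B] [Algebra A B] [Field K] [Algebra A K] [IsAlgClosed K]
    (hAB : Function.Injective (algebraMap A B)) (hAK : Function.Injective (algebraMap A K))
    [Algebra.IsIntegral A B]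
    (hB : ∀ f : B[X], f.Monic → 0 < f.degree → ∃ a, f.IsRoot a) :
    Nonempty (B ≃ₐ[A] integralClosure A K) := by
  have : FaithfulSMul A B := (faithfulSMul_iff_algebraMap_injective A B).2 hAB
  have : FaithfulSMul A K := (faithfulSMul_iff_algebraMap_injective A K).2 hAK
  let φ : B →ₐ[A] K := IsAlgClosed.lift
  let ψ : B →ₐ[A] integralClosure A K :=
    φ.codRestrict (integralClosure A K) fun b => (Algebra.IsIntegral.isIntegral b).map φ
  refine ⟨AlgEquiv.ofBijective ψ ⟨?_, ?_⟩⟩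
  · have hφ : Function.Injective φ := by
      refine (RingHom.injective_iff_ker_eq_bot (φ : B →+* K)).2 ?_
      -- the kernel contracts to `0` in `A`, hence vanishes by integrality
      refine Ideal.eq_bot_of_comap_eq_bot (R := A) ?_
      rw [RingHom.comap_ker, AlgHom.comp_algebraMap]
      exact (RingHom.injective_iff_ker_eq_bot _).1 hAK
    exact fun a b h => hφ (congrArg Subtype.val h)
  · rintro ⟨x, f, hf, hx⟩
    obtain ⟨b, hb⟩ := mem_range_of_eval₂_eq_zero hB (φ : B →+* K) x (f.map (algebraMap A B))
      (hf.map _) (by rw [eval₂_map, AlgHom.comp_algebraMap, hx])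
    exact ⟨b, Subtype.ext hb⟩

theorem algebraMap_algebraicClosure_fractionRing_injective (A : Type*) [CommRing A] [IsDomain A] :
    Function.Injective (algebraMap A (AlgebraicClosure (FractionRing A))) := by
  rw [IsScalarTower.algebraMap_eq A (FractionRing A) (AlgebraicClosure (FractionRing A))]
  exact (algebraMap (FractionRing A) (AlgebraicClosure (FractionRing A))).injective.comp
    (IsFractionRing.injective A (FractionRing A))

open Polynomial in
/-- If `S ⧸ P` is integral over `R ⧸ (P ∩ R)` and monic polynomials of positive degree over `S ⧸ P`
have roots, then `S ⧸ P` is an absolute integral closure of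
`R ⧸ (P ∩ R)`. -/
theorem exists_quotient_ringEquiv_integralClosure {R S : Type*} [CommRing R] [CommRing S]
    [Algebra R S] (P : Ideal S) [P.IsPrime]
    (hint : (Ideal.quotientMap P (algebraMap R S) le_rfl).IsIntegral)
    (hroot : ∀ f : (S ⧸ P)[X], f.Monic → 0 < f.degree → ∃ a, f.IsRoot a) :
    ∃ e : (S ⧸ P) ≃+* integralClosure (R ⧸ P.comap (algebraMap R S))
        (AlgebraicClosure (FractionRing (R ⧸ P.comap (algebraMap R S)))),
      ∀ r : R, e (Ideal.Quotient.mk P (algebraMap R S r)) =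
        algebraMap _ _ (Ideal.Quotient.mk (P.comap (algebraMap R S)) r) := by
  let := (Ideal.quotientMap P (algebraMap R S) le_rfl).toAlgebra
  have : Algebra.IsIntegral (R ⧸ P.comap (algebraMap R S)) (S ⧸ P) :=
    algebraMap_isIntegral_iff.1 hint
  obtain ⟨e⟩ := nonempty_algEquiv_integralClosure
    (A := R ⧸ P.comap (algebraMap R S)) (B := S ⧸ P)
    Ideal.quotientMap_injective
    (algebraMap_algebraicClosure_fractionRing_injective (R ⧸ P.comap (algebraMap R S))) hroot
  exact ⟨e.toRingEquiv, fun r => e.commutes (Ideal.Quotient.mk _ r)⟩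

/-- Let `R` be an integral domain with absolute integral closure `R⁺` and let `P` be a prime
ideal of `R⁺`. Then the natural map `R/(P ∩ R) → R⁺/P` is injective and integral, the ring
`R⁺/P` is a domain in which every monic polynomial of positive degree has a root, and `R⁺/P`
is isomorphic, as an `R/(P ∩ R)`-algebra, to the absolute integral closure `(R/(P ∩ R))⁺`. -/
theorem quotient_of_absolute_integral_closure
    (R : Type) [CommRing R] [IsDomain R]
    (P : Ideal (integralClosure R (AlgebraicClosure (FractionRing R)))) [P.IsPrime] :
    Function.Injective
      (Ideal.quotientMap P
        (algebraMap R (integralClosure R (AlgebraicClosure (FractionRing R)))) le_rfl) ∧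
    RingHom.IsIntegral
      (Ideal.quotientMap P
        (algebraMap R (integralClosure R (AlgebraicClosure (FractionRing R)))) le_rfl) ∧
    IsDomain ((integralClosure R (AlgebraicClosure (FractionRing R))) ⧸ P) ∧
    (∀ f : Polynomial ((integralClosure R (AlgebraicClosure (FractionRing R))) ⧸ P),
      f.Monic → 0 < f.degree → ∃ a, f.IsRoot a) ∧
    ∃ e : ((integralClosure R (AlgebraicClosure (FractionRing R))) ⧸ P) ≃+*
        (integralClosure
          (R ⧸ P.comap (algebraMap R (integralClosure R (AlgebraicClosure (FractionRing R)))))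
          (AlgebraicClosure (FractionRing
            (R ⧸ P.comap (algebraMap R (integralClosure R (AlgebraicClosure (FractionRing R)))))))),
      ∀ r : R,
        e (Ideal.Quotient.mk P
            (algebraMap R (integralClosure R (AlgebraicClosure (FractionRing R))) r)) =
          algebraMap _ _
            (Ideal.Quotient.mk
              (P.comap (algebraMap R (integralClosure R (AlgebraicClosure (FractionRing R))))) r) := by
  have hint : RingHom.IsIntegral (Ideal.quotientMap P
      (algebraMap R (integralClosure R (AlgebraicClosure (FractionRing R)))) le_rfl) :=
    (algebraMap_isIntegral_iff.2 inferInstance : RingHom.IsIntegral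
      (algebraMap R (integralClosure R (AlgebraicClosure (FractionRing R))))).quotient
  have hroot := exists_isRoot_quotient P
    (exists_isRoot_integralClosure (R := R) (K := AlgebraicClosure (FractionRing R)))
  exact ⟨Ideal.quotientMap_injective, hint, inferInstance, hroot,
    exists_quotient_ringEquiv_integralClosure P hint hroot⟩
end
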